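/- arXiv:2106.09676 — 2 statements merged into one kernel-verified Lean document; each statement's English description precedes it below -/
import Mathlib

section
/- For a conjugate-permutable subgroup H of a finite group G, h ∈ H, x ∈ G, and any i ≥ 1, the order |H ∩ H^{[x,_{i-1} h]}| divides |H ∩ H^{[x,_i h]}|. -/
open Pointwise

/-- `H` is conjugate-permutable in `G`. -/
def IsConjPermutable {G : Type*} [Group G] (H : Subgroup G) : Prop :=
  ∀ x : G, (H : Set G) * ((fun g => x⁻¹ * g * x) '' (H : Set G)) =
    ((fun g => x⁻¹ * g * x) '' (H : Set G)) * (H : Set G)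

/-- Left-normed iterated commutator. -/
def engel {G : Type*} [Group G] (x h : G) : ℕ → G
  | 0 => x
  | (i + 1) => (engel x h i)⁻¹ * h⁻¹ * (engel x h i) * h

/-- The conjugate subgroup `g⁻¹ H g`. -/
def conjSub {G : Type*} [Group G] (g : G) (H : Subgroup G) : Subgroup G :=
  H.map (MulAut.conj g⁻¹).toMonoidHom

/-! If `H` permutes with `K`, then `H ⊔ K = K H`, so the index of `H` in `H ⊔ K` is `|K : H ∩ K|`.
For `y ∈ G` and `h ∈ H` the commutator `[y, h] = (h⁻¹)^y h` lies in `J = H ⊔ H^y`, hence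
`H^[y, h] ≤ J`. Therefore `|H^[y, h] : H ∩ H^[y, h]| = |H ⊔ H^[y, h] : H|` divides
`|J : H| = |H^y : H ∩ H^y|`. As the two conjugates have the same order, the orders of the
intersections divide in the opposite direction. -/

section Permuting

variable {G : Type*} [Group G] {H K L : Subgroup G}

theorem coe_sup_of_commute (hHK : Commute (H : Set G) K) :
    ((H ⊔ K : Subgroup G) : Set G) = H * K := by
  let HK : Subgroup G :=
    { carrier := H * K
      one_mem' := ⟨1, one_mem H, 1, one_mem K, one_mul 1⟩
      mul_mem' := fun {a b} ha hb => by
        have hab : a * b ∈ (H * K * (H * K) : Set G) := Set.mul_mem_mul ha hb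
        rwa [hHK.symm.mul_mul_mul_comm, coe_mul_coe, coe_mul_coe] at hab
      inv_mem' := fun {a} ha => by
        have ha' : a⁻¹ ∈ (H * K : Set G)⁻¹ := Set.inv_mem_inv.2 ha
        rwa [mul_inv_rev, inv_coe_set, inv_coe_set, ← hHK.eq] at ha' }
  refine Set.Subset.antisymm ?_ (Set.mul_subset_iff.2 fun _ ha _ hb => Subgroup.mul_mem_sup ha hb)
  have hH : H ≤ HK := fun a ha => ⟨a, ha, 1, one_mem K, mul_one a⟩
  have hK : K ≤ HK := fun b hb => ⟨1, one_mem H, b, hb, one_mul b⟩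
  exact sup_le hH hK

theorem relIndex_sup_of_commute (hHK : Commute (H : Set G) K) :
    H.relIndex (H ⊔ K) = H.relIndex K := by
  let ι := Subgroup.quotientSubgroupOfEmbeddingOfLE H (le_sup_right : K ≤ H ⊔ K)
  suffices hι : Function.Surjective ι from (Nat.card_eq_of_bijective ι ⟨ι.injective, hι⟩).symm
  rintro ⟨g, hg⟩
  obtain ⟨b, hb, a, ha, rfl⟩ : g ∈ (K * H : Set G) := by
    rwa [← hHK.eq, ← coe_sup_of_commute hHK]
  refine ⟨QuotientGroup.mk ⟨b, hb⟩, QuotientGroup.eq.2 ?_⟩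
  simpa [Subgroup.mem_subgroupOf] using ha

theorem relIndex_dvd_relIndex_of_le_sup (hHK : Commute (H : Set G) K)
    (hHL : Commute (H : Set G) L) (hL : L ≤ H ⊔ K) : H.relIndex L ∣ H.relIndex K := by
  rw [← relIndex_sup_of_commute hHK, ← relIndex_sup_of_commute hHL]
  exact Dvd.intro _ (Subgroup.relIndex_mul_relIndex _ _ _ le_sup_left (sup_le le_sup_left hL))

end Permuting

section Card

variable {G : Type*} [Group G]

theorem card_inf_mul_relIndex (H K : Subgroup G) :
    Nat.card (H ⊓ K : Subgroup G) * H.relIndex K = Nat.card K := by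
  simpa only [Subgroup.relIndex_bot_left, Subgroup.inf_relIndex_right] using
    Subgroup.relIndex_mul_relIndex ⊥ (H ⊓ K) K bot_le inf_le_right

theorem card_inf_dvd_card_inf_of_relIndex_dvd {H K L : Subgroup G} [Finite L]
    (hcard : Nat.card K = Nat.card L) (hdvd : H.relIndex L ∣ H.relIndex K) :
    Nat.card (H ⊓ K : Subgroup G) ∣ Nat.card (H ⊓ L : Subgroup G) := by
  have hpos : 0 < H.relIndex L := Nat.pos_of_dvd_of_pos (H.relIndex_dvd_card L) Nat.card_pos
  refine Nat.dvd_of_mul_dvd_mul_right hpos ?_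
  calc Nat.card (H ⊓ K : Subgroup G) * H.relIndex L
      ∣ Nat.card (H ⊓ K : Subgroup G) * H.relIndex K := mul_dvd_mul_left _ hdvd
    _ = Nat.card (H ⊓ L : Subgroup G) * H.relIndex L := by
      rw [card_inf_mul_relIndex, card_inf_mul_relIndex, hcard]

end Card

section Conjugates

variable {G : Type*} [Group G] {H : Subgroup G}

theorem coe_conjSub (g : G) (H : Subgroup G) :
    (conjSub g H : Set G) = (fun x => g⁻¹ * x * g) '' H :=
  Set.image_congr fun a _ => by simp

theorem conj_mem_conjSub (g : G) {a : G} (ha : a ∈ H) : g⁻¹ * a * g ∈ conjSub g H := by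
  rw [← SetLike.mem_coe, coe_conjSub]
  exact Set.mem_image_of_mem _ ha

theorem conjSub_le {J : Subgroup G} {g : G} (hg : g ∈ J) (hHJ : H ≤ J) : conjSub g H ≤ J := by
  rw [← SetLike.coe_subset_coe, coe_conjSub, Set.image_subset_iff]
  exact fun a ha => mul_mem (mul_mem (inv_mem hg) (hHJ ha)) hg

theorem card_conjSub (g : G) (H : Subgroup G) : Nat.card (conjSub g H) = Nat.card H :=
  Subgroup.card_map_of_injective (MulAut.conj g⁻¹).injective

theorem engel_succ_mem_sup_conjSub {h : G} (hh : h ∈ H) (x : G) (i : ℕ) :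
    engel x h (i + 1) ∈ H ⊔ conjSub (engel x h i) H :=
  mul_mem (Subgroup.mem_sup_right (conj_mem_conjSub _ (inv_mem hh))) (Subgroup.mem_sup_left hh)

theorem IsConjPermutable.commute_conjSub (hH : IsConjPermutable H) (g : G) :
    Commute (H : Set G) (conjSub g H) := by
  rw [coe_conjSub]
  exact hH g

theorem IsConjPermutable.relIndex_conjSub_engel_succ_dvd (hH : IsConjPermutable H) {h : G}
    (hh : h ∈ H) (x : G) (i : ℕ) :
    H.relIndex (conjSub (engel x h (i + 1)) H) ∣ H.relIndex (conjSub (engel x h i) H) :=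
  relIndex_dvd_relIndex_of_le_sup (hH.commute_conjSub _) (hH.commute_conjSub _)
    (conjSub_le (engel_succ_mem_sup_conjSub hh x i) le_sup_left)

end Conjugates

theorem card_inter_dvd_general {G : Type*} [Group G] (H : Subgroup G) [Finite H]
    (hH : IsConjPermutable H) (h : G) (hh : h ∈ H) (x : G) (i : ℕ) :
    Nat.card (H ⊓ conjSub (engel x h i) H : Subgroup G) ∣
      Nat.card (H ⊓ conjSub (engel x h (i + 1)) H : Subgroup G) := by
  have : Finite (conjSub (engel x h (i + 1)) H) :=
    Nat.finite_of_card_ne_zero ((card_conjSub _ H).trans_ne Nat.card_pos.ne')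
  refine card_inf_dvd_card_inf_of_relIndex_dvd ?_ (hH.relIndex_conjSub_engel_succ_dvd hh x i)
  rw [card_conjSub, card_conjSub]

theorem card_inter_dvd {G : Type*} [Group G] [Finite G] (H : Subgroup G)
    (hH : IsConjPermutable H) (h : G) (hh : h ∈ H) (x : G) (i : ℕ) (hi : 1 ≤ i) :
    Nat.card (H ⊓ conjSub (engel x h (i - 1)) H : Subgroup G) ∣
      Nat.card (H ⊓ conjSub (engel x h i) H : Subgroup G) := by
  obtain ⟨i, rfl⟩ := Nat.exists_eq_add_of_le' hi
  exact card_inter_dvd_general H hH h hh x i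
end

section
/- The class of finite ECP-groups is not closed under direct products: there exist two finite ECP-groups H₁ and H₂ (each a product of two cyclic subgroups, of orders 27·9) such that H₁ × H₂ is not an ECP-group. -/
open Pointwise

/-- `G` is an ECP-group: every subgroup is conjugate-permutable. -/
def IsECPGroup (G : Type*) [Group G] : Prop :=
  ∀ (H : Subgroup G) (x : G),
    (H : Set G) * ((fun g => x⁻¹ * g * x) '' (H : Set G)) =
      ((fun g => x⁻¹ * g * x) '' (H : Set G)) * (H : Set G)

/-!
Let `p` be an odd prime, `q = p ^ (n + 1)` with `2 ≤ n`, and let `G` be the group of affine maps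
`x ↦ u * x + s` of `ZMod q` with linear part `u` in the cyclic group generated by `w = 1 + p`.

Any two cyclic subgroups of `G` permute, hence so do all subgroups. Linear parts lie in a cyclic
`p`-group, so of two elements one, say `y`, has the form `a * x ^ c` with `a` a translation.
Conjugation by `x ^ c` raises `a` to a power `r ≡ 1 [ZMOD p]`, so that
`(a * x ^ c) ^ m = a ^ (1 + r + ⋯ + r ^ (m - 1)) * x ^ (c * m)`. By lifting the exponent the
geometric sums run through all residues modulo a power of `p`, whence `⟨y⟩ * ⟨x⟩ = ⟨a⟩ * ⟨x⟩`,
which is a subgroup because `⟨a⟩` is normal.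

In `G × G`, let `H` be generated by `(x ↦ w * x, x ↦ w⁻¹ * x)` and conjugate it by the translation
by `(1, 1)`. If the two subgroups permuted, there would be an exponent `i` with
`w ^ i = w ^ 2 - w + 1` and `w ^ (-i) = w ^ (-2) - w ^ (-1) + 1`. Multiplying the two gives
`(w - 1) ^ 2 * (w ^ 2 + 1) = 0`, which fails modulo `p ^ 3`.
-/

open scoped commutatorElement

section Quasihamiltonian

variable {G : Type*} [Group G]

/-- A group is quasihamiltonian if any two of its subgroups permute, `H * K = K * H`; here this
is commutation in the monoid `Set G` with the pointwise product. -/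
def IsQuasihamiltonian (G : Type*) [Group G] : Prop :=
  ∀ H K : Subgroup G, Commute (H : Set G) (K : Set G)

theorem IsQuasihamiltonian.isECPGroup (hG : IsQuasihamiltonian G) : IsECPGroup G := by
  intro H x
  have conj_eq_map : (fun g => x⁻¹ * g * x) '' (H : Set G) =
      (H.map (MulAut.conj x⁻¹).toMonoidHom : Subgroup G) := by
    ext g
    simp
  rw [conj_eq_map]
  exact hG H _

theorem isQuasihamiltonian_of_commute_zpowers
    (h : ∀ x y : G, Commute (Subgroup.zpowers x : Set G) (Subgroup.zpowers y : Set G)) :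
    IsQuasihamiltonian G := by
  have mul_subset (H K : Subgroup G) : (H : Set G) * K ⊆ K * H := by
    rintro _ ⟨x, hx, y, hy, rfl⟩
    have hxy : x * y ∈ (Subgroup.zpowers y : Set G) * (Subgroup.zpowers x : Set G) :=
      (h x y).eq ▸ Set.mul_mem_mul (Subgroup.mem_zpowers x) (Subgroup.mem_zpowers y)
    exact Set.mul_subset_mul (Subgroup.zpowers_le.2 hy) (Subgroup.zpowers_le.2 hx) hxy
  exact fun H K => (mul_subset H K).antisymm (mul_subset K H)

theorem commute_coe_of_mul_eq_coe {H K L : Subgroup G} (h : (H : Set G) * K = L) :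
    Commute (H : Set G) (K : Set G) := by
  have h_inv := congrArg (·⁻¹) h
  simp only [mul_inv_rev, inv_coe_set] at h_inv
  exact h.trans h_inv.symm

end Quasihamiltonian

section GeomSum

variable {p : ℕ} {w : ℤ}

theorem emultiplicity_geom_sum (hp : p.Prime) (hp2 : p ≠ 2) (hw : (p : ℤ) ∣ w - 1) (m : ℕ) :
    emultiplicity (p : ℤ) (∑ i ∈ Finset.range m, w ^ i) = emultiplicity p m := by
  have hp_int : Prime (p : ℤ) := Nat.prime_iff_prime_int.1 hp
  obtain rfl | hw1 := eq_or_ne w 1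
  · simp [Int.natCast_emultiplicity]
  have hpw : ¬ (p : ℤ) ∣ w := fun h => hp_int.not_dvd_one (by simpa using dvd_sub h hw)
  have h_lte := Int.emultiplicity_pow_sub_pow hp (hp.odd_of_ne_two hp2) (y := 1) hw hpw m
  rw [one_pow, ← mul_geom_sum, emultiplicity_mul hp_int] at h_lte
  have hfin : FiniteMultiplicity (p : ℤ) (w - 1) :=
    Int.finiteMultiplicity_iff.2 ⟨by simpa using hp.ne_one, sub_ne_zero.2 hw1⟩
  exact (WithTop.add_left_inj (finiteMultiplicity_iff_emultiplicity_ne_top.1 hfin)).1 h_lte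

theorem modEq_of_geom_sum_modEq (hp : p.Prime) (hp2 : p ≠ 2) (hw : (p : ℤ) ∣ w - 1) {k m n : ℕ}
    (h : ∑ i ∈ Finset.range m, w ^ i ≡ ∑ i ∈ Finset.range n, w ^ i [ZMOD (p ^ k : ℕ)]) :
    m ≡ n [MOD p ^ k] := by
  wlog hmn : m ≤ n generalizing m n
  · exact (this h.symm (le_of_not_ge hmn)).symm
  obtain ⟨d, rfl⟩ := Nat.exists_eq_add_of_le hmn
  have h_dvd : (p : ℤ) ^ k ∣ w ^ m * ∑ i ∈ Finset.range d, w ^ i := by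
    simpa [Finset.sum_range_add, pow_add, Finset.mul_sum] using h.dvd
  have h_coprime : IsCoprime (p : ℤ) w := by
    obtain ⟨s, hs⟩ := hw
    exact ⟨-s, 1, by linear_combination hs⟩
  have hd : p ^ k ∣ d := by
    rw [pow_dvd_iff_le_emultiplicity, ← emultiplicity_geom_sum hp hp2 hw,
      ← pow_dvd_iff_le_emultiplicity]
    exact h_coprime.pow.dvd_of_dvd_mul_left h_dvd
  simpa using (Nat.modEq_zero_iff_dvd.2 hd).symm.add_left m

theorem exists_geom_sum_modEq (hp : p.Prime) (hp2 : p ≠ 2) (hw : (p : ℤ) ∣ w - 1)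
    (k : ℕ) (i : ℤ) : ∃ m : ℕ, ∑ j ∈ Finset.range m, w ^ j ≡ i [ZMOD (p ^ k : ℕ)] := by
  have : NeZero (p ^ k) := ⟨pow_ne_zero k hp.ne_zero⟩
  have h_inj : Function.Injective fun m : ZMod (p ^ k) =>
      ((∑ j ∈ Finset.range m.val, w ^ j : ℤ) : ZMod (p ^ k)) := by
    intro m n hmn
    have h_val := modEq_of_geom_sum_modEq hp hp2 hw ((ZMod.intCast_eq_intCast_iff _ _ _).1 hmn)
    simpa using (ZMod.natCast_eq_natCast_iff _ _ _).2 h_val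
  obtain ⟨m, hm⟩ := Finite.surjective_of_injective h_inj (i : ZMod (p ^ k))
  exact ⟨m.val, (ZMod.intCast_eq_intCast_iff _ _ _).1 hm⟩

end GeomSum

section Cyclic

theorem zpow_mem_zpowers_zpow_of_gcd_dvd {G : Type*} [Group G] (g : G) {i j : ℤ}
    (h : (Int.gcd i (orderOf g) : ℤ) ∣ j) : g ^ j ∈ Subgroup.zpowers (g ^ i) := by
  obtain ⟨c, rfl⟩ := h
  refine ⟨Int.gcdA i (orderOf g) * c, ?_⟩
  simp only [Int.gcd_eq_gcd_ab, add_mul, zpow_add, mul_assoc, zpow_mul, zpow_natCast,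
    pow_orderOf_eq_one, one_zpow, mul_one]

theorem mem_zpowers_or_mem_zpowers_of_isPGroup {C : Type*} [Group C] [IsCyclic C] {p : ℕ}
    (hp : p.Prime) (hC : IsPGroup p C) (x y : C) :
    y ∈ Subgroup.zpowers x ∨ x ∈ Subgroup.zpowers y := by
  obtain ⟨g, hg⟩ := IsCyclic.exists_generator (α := C)
  obtain ⟨i, rfl⟩ := hg x
  obtain ⟨j, rfl⟩ := hg y
  obtain ⟨N, hN⟩ := isPGroup_iff_orderOf_dvd_pow.1 hC g
  have gcd_eq_pow (i : ℤ) : ∃ a, Int.gcd i (orderOf g) = p ^ a := by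
    obtain ⟨a, -, ha⟩ := (Nat.dvd_prime_pow hp).1
      ((Int.natCast_dvd_natCast.1 (Int.gcd_dvd_right ..)).trans hN)
    exact ⟨a, ha⟩
  obtain ⟨a, ha⟩ := gcd_eq_pow i
  obtain ⟨b, hb⟩ := gcd_eq_pow j
  have mem_of_le {i j : ℤ} {a b : ℕ} (hi : Int.gcd i (orderOf g) = p ^ a)
      (hj : Int.gcd j (orderOf g) = p ^ b) (hab : a ≤ b) :
      g ^ j ∈ Subgroup.zpowers (g ^ i) := by
    refine zpow_mem_zpowers_zpow_of_gcd_dvd g (dvd_trans ?_ (Int.gcd_dvd_left j (orderOf g)))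
    rw [hi, hj]
    exact Int.natCast_dvd_natCast.2 (pow_dvd_pow p hab)
  exact (le_total a b).imp (mem_of_le ha hb) (mem_of_le hb ha)

end Cyclic

section Iwasawa

variable {G : Type*} [Group G]

theorem mul_pow_of_semiconjBy {a z : G} {w : ℤ} (h : SemiconjBy z a (a ^ w)) (m : ℕ) :
    (a * z) ^ m = a ^ (∑ i ∈ Finset.range m, w ^ i) * z ^ m := by
  induction m with
  | zero => simp
  | succ m ih =>
    have h_comm := h.zpow_right (∑ i ∈ Finset.range m, w ^ i)
    rw [← zpow_mul] at h_comm
    calc (a * z) ^ (m + 1) = a * (z * a ^ (∑ i ∈ Finset.range m, w ^ i)) * z ^ m := by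
          rw [pow_succ', ih]; simp only [mul_assoc]
      _ = a ^ (1 + w * ∑ i ∈ Finset.range m, w ^ i) * z ^ (m + 1) := by
          rw [h_comm.eq, zpow_one_add, pow_succ']; simp only [mul_assoc]
      _ = a ^ (∑ i ∈ Finset.range (m + 1), w ^ i) * z ^ (m + 1) := by
          rw [geom_sum_succ, add_comm]

theorem exists_mul_pow_eq {p : ℕ} (hp : p.Prime) (hp2 : p ≠ 2) {a z : G} {k : ℕ}
    (ha : a ^ p ^ k = 1) (h : ⁅z, a⁆ ∈ Subgroup.zpowers (a ^ p)) (i : ℤ) :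
    ∃ m : ℕ, (a * z) ^ m = a ^ i * z ^ m := by
  obtain ⟨s, hs : (a ^ p) ^ s = ⁅z, a⁆⟩ := h
  have h_semiconj : SemiconjBy z a (a ^ (p * s + 1 : ℤ)) := by
    rw [SemiconjBy, zpow_add_one, zpow_mul, zpow_natCast, hs]
    simp [commutatorElement_def]
  obtain ⟨m, hm⟩ := exists_geom_sum_modEq (w := p * s + 1) hp hp2 (by simp) k i
  refine ⟨m, ?_⟩
  rw [mul_pow_of_semiconjBy h_semiconj, zpow_eq_zpow_iff_modEq.2
    (hm.of_dvd (Int.natCast_dvd_natCast.2 (orderOf_dvd_of_pow_eq_one ha)))]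

theorem normal_zpowers_of_commutator_mem {a : G} (h : ∀ g : G, ⁅g, a⁆ ∈ Subgroup.zpowers a) :
    (Subgroup.zpowers a).Normal where
  conj_mem := by
    rintro _ ⟨k, rfl⟩ g
    have h_conj : g * a * g⁻¹ ∈ Subgroup.zpowers a := by
      simpa [commutatorElement_def] using mul_mem (h g) (Subgroup.mem_zpowers a)
    simpa only [conj_zpow] using zpow_mem h_conj k

theorem commute_zpowers_mul_zpow {p : ℕ} (hp : p.Prime) (hp2 : p ≠ 2) {a : G} {k : ℕ}
    (ha : a ^ p ^ k = 1) (h : ∀ g : G, ⁅g, a⁆ ∈ Subgroup.zpowers (a ^ p)) (x : G) (c : ℤ) :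
    Commute (Subgroup.zpowers (a * x ^ c) : Set G) (Subgroup.zpowers x : Set G) := by
  have : (Subgroup.zpowers a).Normal := normal_zpowers_of_commutator_mem fun g =>
    Subgroup.zpowers_le.2 (pow_mem (Subgroup.mem_zpowers a) p) (h g)
  refine commute_coe_of_mul_eq_coe (L := Subgroup.zpowers a ⊔ Subgroup.zpowers x)
    (Set.Subset.antisymm ?_ ?_)
  · have ha_mem : a ∈ Subgroup.zpowers a ⊔ Subgroup.zpowers x :=
      Subgroup.mem_sup_left (Subgroup.mem_zpowers a)
    have hx_mem : x ∈ Subgroup.zpowers a ⊔ Subgroup.zpowers x :=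
      Subgroup.mem_sup_right (Subgroup.mem_zpowers x)
    rintro _ ⟨_, ⟨i, rfl⟩, _, ⟨j, rfl⟩, rfl⟩
    exact mul_mem (zpow_mem (mul_mem ha_mem (zpow_mem hx_mem c)) i) (zpow_mem hx_mem j)
  · rw [Subgroup.normal_mul]
    rintro _ ⟨_, ⟨i, rfl⟩, _, ⟨j, rfl⟩, rfl⟩
    obtain ⟨m, hm⟩ := exists_mul_pow_eq hp hp2 ha (h (x ^ c)) i
    refine ⟨(a * x ^ c) ^ m, Subgroup.npow_mem_zpowers _ m, x ^ (j - c * m),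
      Subgroup.zpow_mem_zpowers x _, ?_⟩
    simp only [hm, mul_assoc, ← zpow_natCast, ← zpow_mul, ← zpow_add, add_sub_cancel]

theorem isQuasihamiltonian_of_commutator_mem_zpowers_pow {C : Type*} [Group C] [IsCyclic C]
    {p : ℕ} (hp : p.Prime) (hp2 : p ≠ 2) (hG : IsPGroup p G) (f : G →* C)
    (hf : ∀ a ∈ f.ker, ∀ g : G, ⁅g, a⁆ ∈ Subgroup.zpowers (a ^ p)) :
    IsQuasihamiltonian G := by
  have commute_of_mem {x y : G} (hxy : f.rangeRestrict y ∈ Subgroup.zpowers (f.rangeRestrict x)) :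
      Commute (Subgroup.zpowers x : Set G) (Subgroup.zpowers y : Set G) := by
    obtain ⟨c, hc : f.rangeRestrict x ^ c = f.rangeRestrict y⟩ := hxy
    have h_ker : y * (x ^ c)⁻¹ ∈ f.ker := by
      rw [← f.ker_rangeRestrict, MonoidHom.mem_ker]
      simp only [map_mul, map_inv, map_zpow, hc, mul_inv_cancel]
    obtain ⟨k, hk⟩ := hG (y * (x ^ c)⁻¹)
    simpa using (commute_zpowers_mul_zpow hp hp2 hk (hf _ h_ker) x c).symm
  refine isQuasihamiltonian_of_commute_zpowers fun x y => ?_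
  have h_range : IsPGroup p f.range := hG.of_surjective _ f.rangeRestrict_surjective
  obtain h | h := mem_zpowers_or_mem_zpowers_of_isPGroup hp h_range
    (f.rangeRestrict x) (f.rangeRestrict y)
  · exact commute_of_mem h
  · exact (commute_of_mem h).symm

end Iwasawa

section SemidirectProduct

open SemidirectProduct

variable {N K : Type*} [Group N] [Group K] {φ : K →* MulAut N}

theorem zpowers_inl_mul_zpowers_inr {a : N} {b : K} (ha : ∀ x, x ∈ Subgroup.zpowers a)
    (hb : ∀ y, y ∈ Subgroup.zpowers b) :
    (Subgroup.zpowers (inl a : N ⋊[φ] K) : Set (N ⋊[φ] K)) *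
      (Subgroup.zpowers (inr b : N ⋊[φ] K) : Set (N ⋊[φ] K)) = Set.univ := by
  refine Set.eq_univ_of_forall fun g => ?_
  rw [← inl_left_mul_inr_right g, ← MonoidHom.map_zpowers, ← MonoidHom.map_zpowers]
  exact Set.mul_mem_mul (Subgroup.mem_map_of_mem inl (ha _)) (Subgroup.mem_map_of_mem inr (hb _))

theorem isPGroup_semidirectProduct {p : ℕ} (hN : IsPGroup p N) (hK : IsPGroup p K) :
    IsPGroup p (N ⋊[φ] K) := by
  intro g
  obtain ⟨k, hk⟩ := hK g.right
  have h_ker : g ^ p ^ k ∈ (rightHom : N ⋊[φ] K →* K).ker := by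
    rw [MonoidHom.mem_ker, map_pow, rightHom_eq_right, hk]
  rw [← range_inl_eq_ker_rightHom] at h_ker
  obtain ⟨x, hx⟩ := h_ker
  obtain ⟨l, hl⟩ := hN x
  exact ⟨k + l, by rw [pow_add, pow_mul, ← hx, ← map_pow, hl, map_one]⟩

end SemidirectProduct

section Units

theorem dvd_sub_one_of_mem_zpowers {R : Type*} [CommRing R] {d : R} {u w : Rˣ}
    (hw : d ∣ (w : R) - 1) (hu : u ∈ Subgroup.zpowers w) : d ∣ (u : R) - 1 := by
  have h_mem_ker (v : Rˣ) :
      v ∈ (Units.map (Ideal.Quotient.mk (Ideal.span {d})).toMonoidHom).ker ↔ d ∣ (v : R) - 1 := by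
    rw [MonoidHom.mem_ker, Units.ext_iff, ← Ideal.mem_span_singleton]
    exact Ideal.Quotient.mk_eq_mk_iff_sub_mem _ 1
  exact (h_mem_ker u).1 (Subgroup.zpowers_le.2 ((h_mem_ker w).2 hw) hu)

theorem isPGroup_of_dvd_sub_one {p n : ℕ} {U : Subgroup (ZMod (p ^ n))ˣ}
    (hU : ∀ u ∈ U, (p : ZMod (p ^ n)) ∣ (u : ZMod (p ^ n)) - 1) : IsPGroup p U := by
  rintro ⟨u, hu⟩
  refine ⟨n, Subtype.ext (Units.ext ?_)⟩
  have h_dvd : (p : ZMod (p ^ n)) ^ (n + 1) ∣ (u : ZMod (p ^ n)) ^ p ^ n - 1 ^ p ^ n :=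
    dvd_sub_pow_of_dvd_sub (hU u hu) n
  rw [pow_succ, ← Nat.cast_pow, ZMod.natCast_self, zero_mul, zero_dvd_iff, one_pow, sub_eq_zero]
    at h_dvd
  simpa using h_dvd

theorem exists_unit_eq_one_add_prime_orderOf_eq {p : ℕ} (hp : p.Prime) (hp2 : p ≠ 2) (n : ℕ) :
    ∃ w : (ZMod (p ^ (n + 1)))ˣ, (w : ZMod (p ^ (n + 1))) = 1 + p ∧ orderOf w = p ^ n := by
  have h_order := ZMod.orderOf_one_add_prime hp hp2 n
  have h_fin : IsOfFinOrder (1 + p : ZMod (p ^ (n + 1))) :=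
    orderOf_pos_iff.1 (h_order ▸ pow_pos hp.pos n)
  obtain ⟨w, hw⟩ := h_fin.isUnit
  exact ⟨w, hw, by rw [← orderOf_units, hw, h_order]⟩

theorem sub_one_sq_mul_sq_add_one_ne_zero {p : ℕ} (hp : p.Prime) (hp2 : p ≠ 2) {n : ℕ}
    (hn : 2 ≤ n) {x : ZMod (p ^ (n + 1))} (hx : x = 1 + p) :
    (x - 1) ^ 2 * (x ^ 2 + 1) ≠ 0 := by
  intro h
  have h_dvd : p ^ (n + 1) ∣ p ^ 2 * (p * (p + 2) + 2) := by
    rw [← ZMod.natCast_eq_zero_iff, ← h, hx]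
    push_cast
    ring
  have h_dvd_factor : p ∣ p * (p + 2) + 2 :=
    Nat.dvd_of_mul_dvd_mul_left (pow_pos hp.pos 2)
      ((pow_dvd_pow p (Nat.succ_le_succ hn)).trans h_dvd)
  have h_dvd_two : p ∣ 2 := (Nat.dvd_add_right (dvd_mul_right ..)).1 h_dvd_factor
  exact hp2 ((Nat.prime_dvd_prime_iff_eq hp Nat.prime_two).1 h_dvd_two)

end Units

section Affine

open SemidirectProduct

variable {R : Type*} [CommRing R] {U : Subgroup Rˣ}

/-- The action of a group of units of `R` on the additive group of `R` by multiplication. -/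
def scaling (U : Subgroup Rˣ) : U →* MulAut (Multiplicative R) :=
  (MulAutMultiplicative R).symm.toMonoidHom.comp (AddAut.mulLeft.comp U.subtype)

@[simp]
theorem toAdd_scaling (u : U) (s : Multiplicative R) :
    (scaling U u s).toAdd = (u : Rˣ) * s.toAdd :=
  rfl

/-- The group of affine maps `x ↦ u * x + s` of `R` with linear part `u` in `U`, encoded as the
semidirect product of the translations `s : R` by `U`. -/
abbrev AffineGroup (R : Type*) [CommRing R] (U : Subgroup Rˣ) : Type _ :=
  Multiplicative R ⋊[scaling U] U

namespace AffineGroup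

theorem commutator_inl (g : AffineGroup R U) (s : Multiplicative R) :
    ⁅g, (inl s : AffineGroup R U)⁆ = inl (.ofAdd (((g.right : Rˣ) - 1 : R) * s.toAdd)) := by
  ext
  · simp [commutatorElement_def, sub_eq_add_neg, add_mul]
  · simp [commutatorElement_def]

theorem commutator_mem_zpowers_pow {n p : ℕ} {U : Subgroup (ZMod n)ˣ}
    (hU : ∀ u ∈ U, (p : ZMod n) ∣ (u : ZMod n) - 1) {a : AffineGroup (ZMod n) U}
    (ha : a ∈ rightHom.ker) (g : AffineGroup (ZMod n) U) :
    ⁅g, a⁆ ∈ Subgroup.zpowers (a ^ p) := by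
  rw [← range_inl_eq_ker_rightHom] at ha
  obtain ⟨s, rfl⟩ := ha
  obtain ⟨c, hc⟩ := hU _ g.right.2
  obtain ⟨m, rfl⟩ := ZMod.intCast_surjective c
  have h_smul : (s ^ p) ^ m = .ofAdd ((p * m : ZMod n) * s.toAdd) :=
    Multiplicative.toAdd.injective (by simp [mul_left_comm, mul_assoc])
  exact ⟨m, by simp only [commutator_inl, hc, ← map_pow, ← map_zpow, h_smul]⟩

theorem isECPGroup {p : ℕ} (hp : p.Prime) (hp2 : p ≠ 2) {n : ℕ} {U : Subgroup (ZMod (p ^ n))ˣ}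
    (hU : ∀ u ∈ U, (p : ZMod (p ^ n)) ∣ (u : ZMod (p ^ n)) - 1) :
    IsECPGroup (AffineGroup (ZMod (p ^ n)) U) := by
  have h_cyclic := ZMod.isCyclic_units_of_prime_pow p hp hp2 n
  have h_translations : IsPGroup p (Multiplicative (ZMod (p ^ n))) :=
    .of_card (n := n) ((Nat.card_congr Multiplicative.toAdd).trans (Nat.card_zmod _))
  have h_pGroup : IsPGroup p (AffineGroup (ZMod (p ^ n)) U) :=
    isPGroup_semidirectProduct h_translations (isPGroup_of_dvd_sub_one hU)
  exact (isQuasihamiltonian_of_commutator_mem_zpowers_pow hp hp2 h_pGroup rightHom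
    fun _ ha g => commutator_mem_zpowers_pow hU ha g).isECPGroup

theorem zpow_eq_of_mul_conj_eq {v : U} {i j : ℤ}
    (h : (inr v * ((inl (.ofAdd 1))⁻¹ * inr v * inl (.ofAdd 1)) : AffineGroup R U) =
      (inl (.ofAdd 1))⁻¹ * inr v ^ i * inl (.ofAdd 1) * inr v ^ j) :
    ((v : Rˣ) ^ i : Rˣ) = ((v : Rˣ) ^ 2 - (v : Rˣ) + 1 : R) := by
  rw [← map_zpow, ← map_zpow] at h
  have h_left : (v : Rˣ) * (-1 + (v : Rˣ)) = (-1 + ((v : Rˣ) ^ i : Rˣ) : R) := by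
    simpa [-map_zpow, mul_add] using congrArg (fun g : AffineGroup R U => g.left.toAdd) h
  linear_combination - h_left

theorem not_isECPGroup_prod {w : Rˣ} (hw : w ∈ U)
    (hne : ((w : R) - 1) ^ 2 * ((w : R) ^ 2 + 1) ≠ 0) :
    ¬ IsECPGroup (AffineGroup R U × AffineGroup R U) := by
  intro hECP
  let v : U := ⟨w, hw⟩
  let u : AffineGroup R U × AffineGroup R U := (inr v, inr v⁻¹)
  let t : AffineGroup R U × AffineGroup R U := (inl (.ofAdd 1), inl (.ofAdd 1))
  have h_mem := Set.mul_mem_mul (Subgroup.mem_zpowers u)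
    (Set.mem_image_of_mem (fun g => t⁻¹ * g * t) (Subgroup.mem_zpowers u))
  rw [hECP] at h_mem
  obtain ⟨_, ⟨_, ⟨i, rfl⟩, rfl⟩, _, ⟨j, rfl⟩, h⟩ := h_mem
  have h_fst := zpow_eq_of_mul_conj_eq (congrArg Prod.fst h).symm
  have h_snd := zpow_eq_of_mul_conj_eq (congrArg Prod.snd h).symm
  have h_prod : ((w ^ 2 - w + 1 : R) * ((w⁻¹ : Rˣ) ^ 2 - (w⁻¹ : Rˣ) + 1)) = 1 := by
    rw [← h_fst]
    refine (congrArg _ h_snd.symm).trans ?_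
    rw [← Units.val_mul]
    simp [v]
  have h_inv : (w : R) * (w⁻¹ : Rˣ) = 1 := w.mul_inv
  apply hne
  linear_combination (w : R) ^ 2 * h_prod -
    (w ^ 2 - w + 1 : R) * (w * (w⁻¹ : Rˣ) + 1 - w) * h_inv

theorem card_zpowers_inl_one (n : ℕ) (U : Subgroup (ZMod n)ˣ) :
    Nat.card (Subgroup.zpowers (inl (.ofAdd 1) : AffineGroup (ZMod n) U)) = n := by
  rw [Nat.card_zpowers, orderOf_injective inl inl_injective, orderOf_ofAdd_eq_addOrderOf,
    ZMod.addOrderOf_one]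

theorem card_zpowers_inr {n : ℕ} {U : Subgroup (ZMod n)ˣ} (u : U) :
    Nat.card (Subgroup.zpowers (inr u : AffineGroup (ZMod n) U)) = orderOf (u : (ZMod n)ˣ) := by
  rw [Nat.card_zpowers, orderOf_injective inr inr_injective, Subgroup.orderOf_coe]

theorem zpowers_inl_one_mul_zpowers_inr {n : ℕ} {U : Subgroup (ZMod n)ˣ} {u : U}
    (hu : ∀ v, v ∈ Subgroup.zpowers u) :
    (Subgroup.zpowers (inl (.ofAdd 1) : AffineGroup (ZMod n) U) : Set (AffineGroup (ZMod n) U)) *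
      (Subgroup.zpowers (inr u : AffineGroup (ZMod n) U) : Set (AffineGroup (ZMod n) U)) =
        Set.univ := by
  refine zpowers_inl_mul_zpowers_inr (fun s => ?_) hu
  obtain ⟨m, hm⟩ := ZMod.intCast_surjective s.toAdd
  exact ⟨m, Multiplicative.toAdd.injective (by simp [hm])⟩

end AffineGroup

end Affine

theorem ECP_not_closed_under_direct_products_general {p n : ℕ} (hp : p.Prime) (hp2 : p ≠ 2)
    (hn : 2 ≤ n) :
    ∃ (G : Type) (_ : Group G), Finite G ∧ IsECPGroup G ∧
      (∃ a b : G, Nat.card (Subgroup.zpowers a) = p ^ (n + 1) ∧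
        Nat.card (Subgroup.zpowers b) = p ^ n ∧
        (Subgroup.zpowers a : Set G) * (Subgroup.zpowers b : Set G) = Set.univ) ∧
      ¬ IsECPGroup (G × G) := by
  obtain ⟨w, hw, h_order⟩ := exists_unit_eq_one_add_prime_orderOf_eq hp hp2 n
  have : NeZero (p ^ (n + 1)) := ⟨pow_ne_zero _ hp.ne_zero⟩
  let U := Subgroup.zpowers w
  let v : U := ⟨w, Subgroup.mem_zpowers w⟩
  have h_finite : Finite (AffineGroup (ZMod (p ^ (n + 1))) U) :=
    Finite.of_equiv _ SemidirectProduct.equivProd.symm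
  have h_ecp : IsECPGroup (AffineGroup (ZMod (p ^ (n + 1))) U) :=
    AffineGroup.isECPGroup hp hp2 fun _ hu => dvd_sub_one_of_mem_zpowers (by simp [hw]) hu
  have h_generator : ∀ u, u ∈ Subgroup.zpowers v := by
    rintro ⟨_, i, rfl⟩
    exact ⟨i, rfl⟩
  exact ⟨_, _, h_finite, h_ecp,
    ⟨_, _, AffineGroup.card_zpowers_inl_one _ U, (AffineGroup.card_zpowers_inr v).trans h_order,
      AffineGroup.zpowers_inl_one_mul_zpowers_inr h_generator⟩,
    AffineGroup.not_isECPGroup_prod v.2 (sub_one_sq_mul_sq_add_one_ne_zero hp hp2 hn hw)⟩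

theorem ECP_not_closed_under_direct_products :
    ∃ (G₁ : Type) (i₁ : Group G₁) (G₂ : Type) (i₂ : Group G₂),
      Finite G₁ ∧ Finite G₂ ∧
      @IsECPGroup G₁ i₁ ∧ @IsECPGroup G₂ i₂ ∧
      -- each `Gᵢ` is a product of two cyclic subgroups of orders 27 and 9
      (∃ a b : G₁, Nat.card (@Subgroup.zpowers G₁ i₁ a) = 27 ∧
        Nat.card (@Subgroup.zpowers G₁ i₁ b) = 9 ∧
        ((@Subgroup.zpowers G₁ i₁ a : Subgroup G₁) : Set G₁) *
          ((@Subgroup.zpowers G₁ i₁ b : Subgroup G₁) : Set G₁) = Set.univ) ∧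
      (∃ a b : G₂, Nat.card (@Subgroup.zpowers G₂ i₂ a) = 27 ∧
        Nat.card (@Subgroup.zpowers G₂ i₂ b) = 9 ∧
        ((@Subgroup.zpowers G₂ i₂ a : Subgroup G₂) : Set G₂) *
          ((@Subgroup.zpowers G₂ i₂ b : Subgroup G₂) : Set G₂) = Set.univ) ∧
      ¬ @IsECPGroup (G₁ × G₂) (@Prod.instGroup G₁ G₂ i₁ i₂) := by
  obtain ⟨G, i, h_finite, h_ecp, h_factor, h_prod⟩ :=
    ECP_not_closed_under_direct_products_general Nat.prime_three (by decide) le_rfl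
  exact ⟨G, i, G, i, h_finite, h_finite, h_ecp, h_ecp, h_factor, h_factor, h_prod⟩
end
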